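/- There exists a constant C > 0 depending only on r0, m0 and δ such that the following holds for every integer ℓ ≥ 1. Let c belong to H²_δ ∩ C²_δ and satisfy r(r−2m0)·c''(r) + 2(r−m0)·c'(r) − ℓ(ℓ+1)·c(r) = 0 for all r ≥ r0; let β belong to H²_δ ∩ C²_δ with β(r0) = 0; let a0 be a real number; and suppose a belongs to H²_δ ∩ C²_δ, satisfies a(r0) = a0, and satisfies r(r−2m0)·a'(r) + (r−m0)·a(r) − c(r) = r(r−2m0)·β'(r) + (r−m0)·β(r) for all r ≥ r0. Then ‖a''‖²_{L²_{δ-2}} + ‖a''‖²_{C⁰_{δ-2}} + (1+ℓ(ℓ+1))·( ‖a'‖²_{L²_{δ-1}} + ‖a'‖²_{C⁰_{δ-1}} ) + (1+ℓ(ℓ+1))²·( ‖a‖²_{L²_δ} + ‖a‖²_{C⁰_δ} ) ≤ C·[ ‖c'‖²_{L²_{δ-1}} + ‖c'‖²_{C⁰_{δ-1}} + ‖β''‖²_{L²_{δ-2}} + ‖β''‖²_{C⁰_{δ-2}} + (1+ℓ(ℓ+1))·( ‖c‖²_{L²_δ} + ‖c‖²_{C⁰_δ} + ‖β'‖²_{L²_{δ-1}}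 + ‖β'‖²_{C⁰_{δ-1}} ) + (1+ℓ(ℓ+1))²·( ‖β‖²_{L²_δ} + ‖β‖²_{C⁰_δ} ) + (1+ℓ(ℓ+1))²·a0² ]. -/

import Mathlib

/-!
Write `b = a - β`, `D = r (r - 2 m0)`, `λ = ℓ (ℓ + 1)` and `Λ = 1 + λ`. The transport equation reads
`D b' + (r - m0) b = c`, that is `(√D b)' = c / √D`, while the equation for `c` is `(D c')' = λ c`.
Hence `G = λ √D b - √D c'` satisfies `G' = (r - m0) c' / √D`: the potential term `c` has dropped
out, which is what gains the factor `λ`. Since `|c'| ≤ K r^(δ-1)` with `K = ‖c'‖_{C⁰_{δ-1}}` and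
`δ < 0`, the right-hand side is integrable on `[r0, ∞)`, so `G` is bounded and
`λ |b| ≤ A (λ |a0| + K) / r` (`abs_b_le`). As `δ > -1`, the function `1 / r` has finite `L²_δ` and
`C⁰_δ` norms (`N_inv_ne_top`), which gives the bound on `Λ² ‖b‖²`.

The derivatives are then read off algebraically: `b' = (c - (r - m0) b) / D` and, differentiating
once, `b'' = (c' - 3 (r - m0) b' - b) / D`, where `D` is comparable to `r²`. All these bounds are
pointwise, so they pass to `N = wL2 + wC0` at once (`N_le`). Adding `β` back gives the claim.
-/

open Set MeasureTheory
open scoped ENNReal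

/-- Squared weighted L² norm: `‖f‖²_{L²_μ} = ∫_{r0}^∞ r^{-2μ-1} f(r)² dr`. -/
noncomputable def wL2 (r0 μ : ℝ) (f : ℝ → ℝ) : ℝ≥0∞ :=
  ∫⁻ r in Set.Ioi r0, ENNReal.ofReal (r ^ (-2*μ-1) * (f r)^2)

/-- Squared weighted C⁰ norm: `‖f‖²_{C⁰_μ} = sup_{r ≥ r0} r^{-2μ} f(r)²`. -/
noncomputable def wC0 (r0 μ : ℝ) (f : ℝ → ℝ) : ℝ≥0∞ :=
  ⨆ r ∈ Set.Ici r0, ENNReal.ofReal (r ^ (-2*μ) * (f r)^2)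

/-- First derivative on `[r0, ∞)`. -/
noncomputable def d1 (r0 : ℝ) (f : ℝ → ℝ) : ℝ → ℝ :=
  fun r => derivWithin f (Set.Ici r0) r

/-- Second derivative on `[r0, ∞)`. -/
noncomputable def d2 (r0 : ℝ) (f : ℝ → ℝ) : ℝ → ℝ := d1 r0 (d1 r0 f)

/-- `f` belongs to `H²_δ ∩ C²_δ`. -/
def MemH2C2 (r0 δ : ℝ) (f : ℝ → ℝ) : Prop :=
  ContDiffOn ℝ 2 f (Set.Ici r0) ∧
  wL2 r0 δ f ≠ ⊤ ∧ wL2 r0 (δ-1) (d1 r0 f) ≠ ⊤ ∧ wL2 r0 (δ-2) (d2 r0 f) ≠ ⊤ ∧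
  wC0 r0 δ f ≠ ⊤ ∧ wC0 r0 (δ-1) (d1 r0 f) ≠ ⊤ ∧ wC0 r0 (δ-2) (d2 r0 f) ≠ ⊤

/-- The operator `L_ℓ`. -/
noncomputable def Lop (r0 m0 : ℝ) (l : ℤ) (f : ℝ → ℝ) : ℝ → ℝ :=
  fun r => d2 r0 f r + (2*(r - m0)/(r*(r - 2*m0))) * d1 r0 f r
    - ((l : ℝ)*((l : ℝ)+1)/(r*(r - 2*m0))) * f r

/-! ### Combined weighted norms -/

/-- The sum of the squared weighted `L²` and `C⁰` norms. -/
noncomputable def N (r0 μ : ℝ) (f : ℝ → ℝ) : ℝ≥0∞ := wL2 r0 μ f + wC0 r0 μ f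

/-- Pointwise domination of the weighted squares passes to the combined norms. -/
lemma N_le {r0 : ℝ} (hr0 : 0 < r0) {K μ μ1 μ2 μ3 : ℝ} (hK : 0 ≤ K) {f f1 f2 f3 : ℝ → ℝ}
    (h1 : ContinuousOn f1 (Ici r0)) (h2 : ContinuousOn f2 (Ici r0))
    (h : ∀ r, r0 ≤ r → r ^ (-2*μ) * f r ^ 2 ≤
      K * (r ^ (-2*μ1) * f1 r ^ 2 + r ^ (-2*μ2) * f2 r ^ 2 + r ^ (-2*μ3) * f3 r ^ 2)) :
    N r0 μ f ≤ ENNReal.ofReal K * (N r0 μ1 f1 + N r0 μ2 f2 + N r0 μ3 f3) := by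
  have meas : ∀ (ν : ℝ) (g : ℝ → ℝ), ContinuousOn g (Ici r0) →
      AEMeasurable (fun r => ENNReal.ofReal (r ^ (-2*ν-1) * (g r)^2)) (volume.restrict (Ioi r0)) := by
    intro ν g hg
    refine AEMeasurable.ennreal_ofReal (ContinuousOn.aemeasurable ?_ measurableSet_Ioi)
    refine ContinuousOn.mul (fun x hx => ?_) ((hg.mono Ioi_subset_Ici_self).pow 2)
    exact (Real.continuousAt_rpow_const x _ (Or.inl (hr0.trans hx).ne')).continuousWithinAt
  have hL : wL2 r0 μ f ≤ ENNReal.ofReal K * (wL2 r0 μ1 f1 + wL2 r0 μ2 f2 + wL2 r0 μ3 f3) := by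
    unfold wL2
    rw [← lintegral_add_left' (meas μ1 f1 h1),
      ← lintegral_add_left' (show AEMeasurable (fun r => ENNReal.ofReal (r ^ (-2*μ1-1) * f1 r ^ 2) +
        ENNReal.ofReal (r ^ (-2*μ2-1) * f2 r ^ 2)) _ from (meas μ1 f1 h1).add (meas μ2 f2 h2)),
      ← lintegral_const_mul' _ _ ENNReal.ofReal_ne_top]
    refine setLIntegral_mono' measurableSet_Ioi fun r hr => ?_
    have hr' : 0 < r := hr0.trans hr
    rw [← ENNReal.ofReal_add (by positivity) (by positivity),
      ← ENNReal.ofReal_add (by positivity) (by positivity), ← ENNReal.ofReal_mul hK]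
    refine ENNReal.ofReal_le_ofReal ?_
    simp only [Real.rpow_sub_one hr'.ne', div_mul_eq_mul_div, ← add_div]
    rw [← mul_div_assoc]
    exact div_le_div_of_nonneg_right (h r (le_of_lt hr)) hr'.le
  have hC : wC0 r0 μ f ≤ ENNReal.ofReal K * (wC0 r0 μ1 f1 + wC0 r0 μ2 f2 + wC0 r0 μ3 f3) := by
    have up : ∀ (ν : ℝ) (g : ℝ → ℝ) (r : ℝ), r ∈ Ici r0 →
        ENNReal.ofReal (r ^ (-2*ν) * (g r)^2) ≤ wC0 r0 ν g := fun ν g r hr =>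
      le_iSup₂ (f := fun r (_ : r ∈ Ici r0) => ENNReal.ofReal (r ^ (-2*ν) * (g r)^2)) r hr
    refine iSup₂_le fun r hr => ?_
    have hr' : 0 < r := hr0.trans_le hr
    refine (ENNReal.ofReal_le_ofReal (h r hr)).trans ?_
    rw [ENNReal.ofReal_mul hK, ENNReal.ofReal_add (by positivity) (by positivity),
      ENNReal.ofReal_add (by positivity) (by positivity)]
    gcongr <;> exact up _ _ r hr
  calc N r0 μ f ≤ _ := add_le_add hL hC
    _ = _ := by unfold N; ring

lemma N_zero (r0 μ : ℝ) : N r0 μ (fun _ => 0) = 0 := by simp [N, wL2, wC0]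

lemma N_le_two {r0 : ℝ} (hr0 : 0 < r0) {K μ μ1 μ2 : ℝ} (hK : 0 ≤ K) {f f1 f2 : ℝ → ℝ}
    (h1 : ContinuousOn f1 (Ici r0)) (h2 : ContinuousOn f2 (Ici r0))
    (h : ∀ r, r0 ≤ r → r ^ (-2*μ) * f r ^ 2 ≤
      K * (r ^ (-2*μ1) * f1 r ^ 2 + r ^ (-2*μ2) * f2 r ^ 2)) :
    N r0 μ f ≤ ENNReal.ofReal K * (N r0 μ1 f1 + N r0 μ2 f2) := by
  have := N_le (f3 := fun _ => 0) (μ3 := 0) hr0 hK h1 h2 (f := f) (μ := μ) (by simpa using h)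
  rwa [N_zero, add_zero] at this

lemma N_add_le {r0 : ℝ} (hr0 : 0 < r0) (μ : ℝ) {f g : ℝ → ℝ}
    (hf : ContinuousOn f (Ici r0)) (hg : ContinuousOn g (Ici r0)) :
    N r0 μ f ≤ ENNReal.ofReal 2 * (N r0 μ (fun r => f r - g r) + N r0 μ g) := by
  refine N_le_two hr0 (by norm_num) (hf.sub hg) hg fun r hr => ?_
  have : 0 < r := hr0.trans_le hr
  have hw : 0 ≤ r ^ (-2*μ) := by positivity
  rw [← mul_add, mul_left_comm]
  exact mul_le_mul_of_nonneg_left (by nlinarith [sq_nonneg (f r - 2 * g r)]) hw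

/-- `1 / r` has finite `L²_δ` and `C⁰_δ` norms as soon as `δ > -1`. -/
lemma N_inv_ne_top {r0 δ : ℝ} (hr0 : 0 < r0) (hδ : -1 < δ) :
    N r0 δ (fun r => r⁻¹) ≠ ⊤ := by
  refine ENNReal.add_ne_top.2 ⟨?_, ?_⟩
  · have hi := integrableOn_Ioi_rpow_of_lt (a := -2*δ-1-2) (by linarith) hr0
    have := hi.lintegral_lt_top
    unfold wL2
    refine ne_of_lt (lt_of_le_of_lt (le_of_eq ?_) this)
    refine setLIntegral_congr_fun measurableSet_Ioi fun r hr => ?_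
    have hr' : 0 < r := hr0.trans hr
    simp only [Real.rpow_sub hr' (-2*δ-1) 2, Real.rpow_two, inv_pow, div_eq_mul_inv]
  · refine ne_of_lt (lt_of_le_of_lt (iSup₂_le (a := ENNReal.ofReal (r0 ^ (-2*δ-2))) ?_)
      ENNReal.ofReal_lt_top)
    intro r hr
    have hr' : 0 < r := hr0.trans_le hr
    refine ENNReal.ofReal_le_ofReal ?_
    have : r ^ (-2*δ) * r⁻¹ ^ 2 = r ^ (-2*δ-2) := by
      rw [Real.rpow_sub hr', Real.rpow_two, inv_pow, div_eq_mul_inv]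
    rw [this]
    exact Real.rpow_le_rpow_of_nonpos hr0 hr (by linarith)

/-! ### Regularity and decay of functions in `H²_δ ∩ C²_δ` -/

lemma MemH2C2.hasDeriv {r0 δ : ℝ} {f : ℝ → ℝ} (hf : MemH2C2 r0 δ f) {r : ℝ} (hr : r0 ≤ r) :
    HasDerivWithinAt f (d1 r0 f r) (Ici r0) r :=
  ((hf.1.differentiableOn (by norm_num)) r hr).hasDerivWithinAt

lemma MemH2C2.contDiffOn_d1 {r0 δ : ℝ} {f : ℝ → ℝ} (hf : MemH2C2 r0 δ f) :
    ContDiffOn ℝ 1 (d1 r0 f) (Ici r0) :=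
  hf.1.derivWithin (uniqueDiffOn_Ici r0) (by norm_num)

lemma MemH2C2.hasDeriv2 {r0 δ : ℝ} {f : ℝ → ℝ} (hf : MemH2C2 r0 δ f) {r : ℝ} (hr : r0 ≤ r) :
    HasDerivWithinAt (d1 r0 f) (d2 r0 f r) (Ici r0) r :=
  ((hf.contDiffOn_d1.differentiableOn (by norm_num)) r hr).hasDerivWithinAt

lemma MemH2C2.continuousOn_d2 {r0 δ : ℝ} {f : ℝ → ℝ} (hf : MemH2C2 r0 δ f) :
    ContinuousOn (d2 r0 f) (Ici r0) :=
  hf.contDiffOn_d1.continuousOn_derivWithin (uniqueDiffOn_Ici r0) (by norm_num)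

lemma MemH2C2.N_ne_top {r0 δ : ℝ} {f : ℝ → ℝ} (hf : MemH2C2 r0 δ f) :
    N r0 δ f ≠ ⊤ ∧ N r0 (δ-1) (d1 r0 f) ≠ ⊤ ∧ N r0 (δ-2) (d2 r0 f) ≠ ⊤ :=
  ⟨ENNReal.add_ne_top.2 ⟨hf.2.1, hf.2.2.2.2.1⟩, ENNReal.add_ne_top.2 ⟨hf.2.2.1, hf.2.2.2.2.2.1⟩,
    ENNReal.add_ne_top.2 ⟨hf.2.2.2.1, hf.2.2.2.2.2.2⟩⟩

/-- A finite weighted `C⁰` norm gives the pointwise decay `|f| ≤ K r^μ`. -/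
lemma abs_le_of_wC0 {r0 μ : ℝ} (hr0 : 0 < r0) {f : ℝ → ℝ} (hf : wC0 r0 μ f ≠ ⊤) {r : ℝ}
    (hr : r0 ≤ r) : |f r| ≤ √(wC0 r0 μ f).toReal * r ^ μ := by
  have hr' : 0 < r := hr0.trans_le hr
  have h1 : ENNReal.ofReal (r ^ (-2*μ) * (f r)^2) ≤ wC0 r0 μ f :=
    le_iSup₂ (f := fun r (_ : r ∈ Ici r0) => ENNReal.ofReal (r ^ (-2*μ) * (f r)^2)) r hr
  have h2 := (ENNReal.ofReal_le_iff_le_toReal hf).1 h1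
  have hp : 0 < r ^ μ := Real.rpow_pos_of_pos hr' _
  have h3 : r ^ (-2*μ) = ((r ^ μ) ^ 2)⁻¹ := by
    rw [← Real.rpow_natCast (r ^ μ), ← Real.rpow_mul hr'.le, ← Real.rpow_neg hr'.le]
    congr 1; push_cast; ring
  rw [h3, inv_mul_le_iff₀ (by positivity)] at h2
  refine abs_le_of_sq_le_sq ?_ (by positivity)
  rw [mul_pow, Real.sq_sqrt ENNReal.toReal_nonneg]
  linarith

/-! ### The transport equation -/

lemma D_lower {m0 r0 r : ℝ} (hm0 : 0 < m0) (hr0 : 2*m0 < r0) (hr : r0 ≤ r) :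
    (1 - 2*m0/r0) * r^2 ≤ r*(r - 2*m0) := by
  have h0 : 0 < r0 := by linarith
  have : 2*m0 ≤ 2*m0/r0 * r := by
    rw [div_mul_eq_mul_div, le_div_iff₀ h0]; nlinarith
  nlinarith

/-- The solution `b` of the transport equation decays like `1 / r`, with a gain of a factor `L`
in its dependence on `c`: the function `G = L √D b - √D c'` has derivative `(r - m0) c' / √D`, which
is integrable at infinity. -/
lemma abs_b_le {m0 r0 δ : ℝ} (hm0 : 0 < m0) (hr0 : 2*m0 < r0) (hδ : δ < 0)
    {L K : ℝ} (hL : 0 ≤ L) (hK : 0 ≤ K) {b b1 c c1 c2 : ℝ → ℝ}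
    (hb : ∀ r, r0 ≤ r → HasDerivWithinAt b (b1 r) (Ici r0) r)
    (hc1 : ∀ r, r0 ≤ r → HasDerivWithinAt c1 (c2 r) (Ici r0) r)
    (hc : ∀ r, r0 ≤ r → r*(r - 2*m0) * c2 r + 2*(r - m0) * c1 r - L * c r = 0)
    (he : ∀ r, r0 ≤ r → r*(r - 2*m0) * b1 r + (r - m0) * b r = c r)
    (hcK : ∀ r, r0 ≤ r → |c1 r| ≤ K * r ^ (δ-1)) {r : ℝ} (hr : r0 ≤ r) :
    √(1 - 2*m0/r0) * (L * (r * |b r|)) ≤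
      r0 * (L * |b r0|) + r0 ^ δ * (2 + (√(1 - 2*m0/r0) * (-δ))⁻¹) * K := by
  have h0 : 0 < r0 := by linarith
  have hq : 0 < 1 - 2*m0/r0 := by rw [sub_pos, div_lt_one h0]; exact hr0
  set q := 1 - 2*m0/r0 with hqd
  have hsq : 0 < √q := Real.sqrt_pos.2 hq
  let s : ℝ → ℝ := fun x => √(x*(x - 2*m0))
  have hD : ∀ x, r0 ≤ x → 0 < x*(x - 2*m0) := fun x hx =>
    mul_pos (by linarith) (by linarith)
  have hs : ∀ x, r0 ≤ x → 0 < s x := fun x hx => Real.sqrt_pos.2 (hD x hx)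
  have hss : ∀ x, r0 ≤ x → s x ^ 2 = x*(x - 2*m0) := fun x hx => Real.sq_sqrt (hD x hx).le
  have hslow : ∀ x, r0 ≤ x → √q * x ≤ s x := fun x hx => by
    have hx0 : 0 < x := by linarith
    refine Real.le_sqrt_of_sq_le ?_
    rw [mul_pow, Real.sq_sqrt hq.le]
    exact D_lower hm0 hr0 hx
  have hsup : ∀ x, r0 ≤ x → s x ≤ x := fun x hx =>
    Real.sqrt_le_iff.2 ⟨by linarith, by nlinarith⟩
  have hsd : ∀ x, r0 ≤ x → HasDerivAt s ((x - m0) / s x) x := fun x hx => by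
    have h1 : HasDerivAt (fun x : ℝ => x*(x - 2*m0)) (1 * (x - 2*m0) + x * 1) x :=
      (hasDerivAt_id x).mul ((hasDerivAt_id x).sub_const _)
    convert h1.sqrt (hD x hx).ne' using 1
    have := (hs x hx).ne'
    change _ = _ / (2 * s x)
    field_simp
    ring
  let G : ℝ → ℝ := fun x => L * (s x * b x) - s x * c1 x
  have hG : ∀ x, r0 ≤ x → HasDerivWithinAt G ((x - m0) / s x * c1 x) (Ici r0) x := fun x hx => by
    have h1 := ((((hsd x hx).hasDerivWithinAt (s := Ici r0)).mul (hb x hx)).const_mul L).sub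
      (((hsd x hx).hasDerivWithinAt (s := Ici r0)).mul (hc1 x hx))
    refine h1.congr_deriv ?_
    have hsx := (hs x hx).ne'
    have e1 := hc x hx
    have e2 := he x hx
    rw [← hss x hx] at e1 e2
    field_simp
    linear_combination L * e2 - e1
  have hmain : ∀ x ∈ Icc r0 r, ‖G x‖ ≤ ‖G r0‖ + K / √q / (-δ) * (r0 ^ δ - x ^ δ) := by
    refine image_norm_le_of_norm_deriv_right_le_deriv_boundary'
      (f' := fun x => (x - m0) / s x * c1 x)
      (B' := fun x => K / √q * x ^ (δ-1)) ?_ ?_ ?_ ?_ ?_ ?_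
    · exact fun x hx => (hG x hx.1).continuousWithinAt.mono Icc_subset_Ici_self
    · exact fun x hx => (hG x hx.1).mono (Ici_subset_Ici.2 hx.1)
    · simp
    · intro x hx
      have : x ≠ 0 := by linarith [hx.1]
      exact ((continuousAt_const.add (continuousAt_const.mul (continuousAt_const.sub
        (Real.continuousAt_rpow_const x δ (Or.inl this)))))).continuousWithinAt
    · intro x hx
      have hx0 : x ≠ 0 := by linarith [hx.1]
      have := (((Real.hasDerivAt_rpow_const (p := δ) (Or.inl hx0)).const_sub (r0 ^ δ)).const_mul
        (K / √q / (-δ))).const_add (‖G r0‖)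
      refine this.hasDerivWithinAt.congr_deriv ?_
      have hδ0 := hδ.ne
      field_simp
    · intro x hx
      have hx0 : 0 < x := by linarith [hx.1]
      have h1 : 0 ≤ (x - m0) / s x := div_nonneg (by linarith [hx.1]) (hs x hx.1).le
      have h2 : (x - m0) / s x ≤ 1 / √q := by
        rw [div_le_div_iff₀ (hs x hx.1) hsq]
        nlinarith [hslow x hx.1]
      rw [norm_mul, Real.norm_eq_abs, Real.norm_eq_abs, abs_of_nonneg h1]
      calc _ ≤ 1 / √q * (K * x ^ (δ-1)) := mul_le_mul h2 (hcK x hx.1) (abs_nonneg _) (by positivity)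
        _ = _ := by ring
  have hGr := hmain r ⟨hr, le_rfl⟩
  have hr' : 0 < r := by linarith
  have hscK : ∀ x, r0 ≤ x → s x * |c1 x| ≤ K * r0 ^ δ := fun x hx => by
    have hx0 : 0 < x := by linarith
    calc s x * |c1 x| ≤ x * (K * x ^ (δ-1)) :=
          mul_le_mul (hsup x hx) (hcK x hx) (abs_nonneg _) hx0.le
      _ = K * x ^ δ := by rw [Real.rpow_sub_one hx0.ne']; field_simp
      _ ≤ _ := mul_le_mul_of_nonneg_left (Real.rpow_le_rpow_of_nonpos h0 hx hδ.le) hK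
  have hG0 : ‖G r0‖ ≤ r0 * (L * |b r0|) + K * r0 ^ δ := by
    refine (norm_sub_le _ _).trans (add_le_add ?_ ?_)
    · rw [Real.norm_eq_abs, abs_mul, abs_mul, abs_of_nonneg hL, abs_of_pos (hs r0 le_rfl),
        mul_left_comm]
      exact mul_le_mul_of_nonneg_right (hsup r0 le_rfl) (by positivity)
    · rw [Real.norm_eq_abs, abs_mul, abs_of_pos (hs r0 le_rfl)]
      exact hscK r0 le_rfl
  have hLb : L * (s r * |b r|) ≤ ‖G r‖ + s r * |c1 r| := by
    have : L * (s r * b r) = G r + s r * c1 r := by simp only [G]; ring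
    calc L * (s r * |b r|) = |L * (s r * b r)| := by
          rw [abs_mul, abs_mul, abs_of_nonneg hL, abs_of_pos (hs r hr)]
      _ ≤ |G r| + |s r * c1 r| := by rw [this]; exact abs_add_le _ _
      _ = _ := by rw [abs_mul, abs_of_pos (hs r hr), Real.norm_eq_abs]
  have hlow : √q * (L * (r * |b r|)) ≤ L * (s r * |b r|) := by
    calc _ = L * ((√q * r) * |b r|) := by ring
      _ ≤ _ := by gcongr; exact hslow r hr
  have hP : K / √q / (-δ) * (r0 ^ δ - r ^ δ) ≤ K / √q / (-δ) * r0 ^ δ := by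
    have : 0 ≤ r ^ δ := by positivity
    exact mul_le_mul_of_nonneg_left (by linarith) (div_nonneg (by positivity) (by linarith))
  have hfin : r0 ^ δ * (2 + (√q * (-δ))⁻¹) * K
      = K * r0 ^ δ + K * r0 ^ δ + K / √q / (-δ) * r0 ^ δ := by
    rw [div_div, div_eq_mul_inv]; ring
  linarith [hscK r hr]

/-! ### The weighted estimate -/

lemma add_three_sq_le (x y z : ℝ) : (x + y + z)^2 ≤ 3 * (x^2 + y^2 + z^2) := by
  nlinarith [sq_nonneg (x-y), sq_nonneg (y-z), sq_nonneg (x-z)]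

/-- The weights of orders `δ - 1` and `δ - 2` in terms of the weight of order `δ`. -/
lemma weight_eq {r : ℝ} (hr : 0 < r) (δ : ℝ) :
    r ^ (-2*(δ-1)) = r^2 * r ^ (-2*δ) ∧ r ^ (-2*(δ-2)) = r^4 * r ^ (-2*δ) := by
  constructor
  · rw [← Real.rpow_natCast, ← Real.rpow_add hr]; congr 1; push_cast; ring
  · rw [← Real.rpow_natCast, ← Real.rpow_add hr]; congr 1; push_cast; ring

set_option maxHeartbeats 1000000 in
theorem stmt16 (m0 r0 δ : ℝ) (hm0 : 0 < m0) (hr0 : 2*m0 < r0)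
    (hδ1 : -1 < δ) (hδ2 : δ < -(1/2)) :
    ∃ C : ℝ, 0 < C ∧ ∀ (l : ℤ), 1 ≤ l →
      ∀ (c : ℝ → ℝ), MemH2C2 r0 δ c →
        (∀ r, r0 ≤ r →
          r*(r - 2*m0) * d2 r0 c r + 2*(r - m0) * d1 r0 c r
            - (l:ℝ)*((l:ℝ)+1) * c r = 0) →
      ∀ (β : ℝ → ℝ), MemH2C2 r0 δ β → β r0 = 0 →
      ∀ (a0 : ℝ) (a : ℝ → ℝ), MemH2C2 r0 δ a → a r0 = a0 →
        (∀ r, r0 ≤ r →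
          r*(r - 2*m0) * d1 r0 a r + (r - m0) * a r - c r
            = r*(r - 2*m0) * d1 r0 β r + (r - m0) * β r) →
      wL2 r0 (δ-2) (d2 r0 a) + wC0 r0 (δ-2) (d2 r0 a)
        + ENNReal.ofReal (1 + (l:ℝ)*((l:ℝ)+1)) *
            (wL2 r0 (δ-1) (d1 r0 a) + wC0 r0 (δ-1) (d1 r0 a))
        + (ENNReal.ofReal (1 + (l:ℝ)*((l:ℝ)+1)))^2 *
            (wL2 r0 δ a + wC0 r0 δ a)
      ≤ ENNReal.ofReal C *
        (wL2 r0 (δ-1) (d1 r0 c) + wC0 r0 (δ-1) (d1 r0 c)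
          + wL2 r0 (δ-2) (d2 r0 β) + wC0 r0 (δ-2) (d2 r0 β)
          + ENNReal.ofReal (1 + (l:ℝ)*((l:ℝ)+1)) *
              (wL2 r0 δ c + wC0 r0 δ c
                + wL2 r0 (δ-1) (d1 r0 β) + wC0 r0 (δ-1) (d1 r0 β))
          + (ENNReal.ofReal (1 + (l:ℝ)*((l:ℝ)+1)))^2 *
              (wL2 r0 δ β + wC0 r0 δ β)
          + (ENNReal.ofReal (1 + (l:ℝ)*((l:ℝ)+1)))^2 *
              ENNReal.ofReal (a0^2)) := by
  have h0 : 0 < r0 := by linarith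
  have hq : 0 < 1 - 2*m0/r0 := by rw [sub_pos, div_lt_one h0]; exact hr0
  obtain ⟨q, hqd⟩ : ∃ q, q = 1 - 2*m0/r0 := ⟨_, rfl⟩
  have hq' : 0 < q := hqd ▸ hq
  have hsq : 0 < √q := Real.sqrt_pos.2 hq'
  have hDl : ∀ r, r0 ≤ r → q * r^2 ≤ r*(r - 2*m0) := fun r hr => hqd ▸ D_lower hm0 hr0 hr
  obtain ⟨A, hA⟩ : ∃ A, A = (r0 + r0 ^ δ * (2 + (√q * (-δ))⁻¹)) / √q := ⟨_, rfl⟩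
  have hδn : 0 < -δ := by linarith
  have hA0 : 0 ≤ A := by rw [hA]; positivity
  obtain ⟨I, hI⟩ : ∃ I, I = (N r0 δ (fun r => r⁻¹)).toReal := ⟨_, rfl⟩
  have hI0 : 0 ≤ I := hI ▸ ENNReal.toReal_nonneg
  -- constants in the bounds for `b`, `b'` and `b''`
  obtain ⟨C1, hC1⟩ : ∃ C1, C1 = 8 * A^2 * I := ⟨_, rfl⟩
  obtain ⟨C2, hC2⟩ : ∃ C2, C2 = 2 * (1 + (r0⁻¹)^2) * (q⁻¹)^2 * (1 + r0^2) := ⟨_, rfl⟩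
  obtain ⟨C3, hC3⟩ : ∃ C3, C3 = 27 * (1 + (r0⁻¹)^2) * (q⁻¹)^2 := ⟨_, rfl⟩
  have hC10 : 0 ≤ C1 := by rw [hC1]; positivity
  have hC20 : 0 ≤ C2 := by rw [hC2]; positivity
  have hC30 : 0 ≤ C3 := by rw [hC3]; positivity
  refine ⟨2 * (C3 * (1 + C2 * (1 + C1) + C1) + C2 * (1 + C1) + C1 + 3), by positivity, ?_⟩
  intro l hl c hc hceq β hβ hβ0 a0 a ha haa0 haeq
  have hl1 : (1:ℝ) ≤ l := by exact_mod_cast hl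
  obtain ⟨L, hLd⟩ : ∃ L : ℝ, L = (l:ℝ)*((l:ℝ)+1) := ⟨_, rfl⟩
  have hL1 : 1 ≤ L := by rw [hLd]; nlinarith
  rw [← hLd] at hceq ⊢
  set b : ℝ → ℝ := fun r => a r - β r with hbd
  set b1 : ℝ → ℝ := fun r => d1 r0 a r - d1 r0 β r with hb1d
  set b2 : ℝ → ℝ := fun r => d2 r0 a r - d2 r0 β r with hb2d
  have hb : ∀ r, r0 ≤ r → HasDerivWithinAt b (b1 r) (Ici r0) r := fun r hr =>
    (ha.hasDeriv hr).sub (hβ.hasDeriv hr)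
  have hb1 : ∀ r, r0 ≤ r → HasDerivWithinAt b1 (b2 r) (Ici r0) r := fun r hr =>
    (ha.hasDeriv2 hr).sub (hβ.hasDeriv2 hr)
  have he : ∀ r, r0 ≤ r → r*(r - 2*m0) * b1 r + (r - m0) * b r = c r := fun r hr => by
    have := haeq r hr
    simp only [hbd, hb1d]
    linarith
  have he2 : ∀ r, r0 ≤ r →
      r*(r - 2*m0) * b2 r + 3 * (r - m0) * b1 r + b r = d1 r0 c r := fun r hr => by
    have h1 : HasDerivWithinAt (fun x : ℝ => x*(x - 2*m0)) (1 * (r - 2*m0) + r * 1) (Ici r0) r :=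
      ((hasDerivAt_id r).mul ((hasDerivAt_id r).sub_const _)).hasDerivWithinAt
    have h2 : HasDerivWithinAt (fun x : ℝ => x - m0) 1 (Ici r0) r :=
      ((hasDerivAt_id r).sub_const _).hasDerivWithinAt
    have h3 := (h1.mul (hb1 r hr)).add (h2.mul (hb r hr))
    have h4 := h3.congr_of_mem (f₁ := c) (fun x hx => (he x hx).symm) hr
    have := (uniqueDiffOn_Ici r0 r hr).eq_deriv _ (hc.hasDeriv hr) h4
    linarith
  obtain ⟨K, hK⟩ : ∃ K, K = √(wC0 r0 (δ-1) (d1 r0 c)).toReal := ⟨_, rfl⟩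
  have hK0 : 0 ≤ K := hK ▸ Real.sqrt_nonneg _
  have hbb : ∀ r, r0 ≤ r → L * (r * |b r|) ≤ A * (L * |a0| + K) := fun r hr => by
    have h := abs_b_le hm0 hr0 (by linarith) (by linarith : 0 ≤ L) hK0 hb
      (fun r hr => hc.hasDeriv2 hr) hceq he
      (fun r hr => hK ▸ abs_le_of_wC0 h0 hc.2.2.2.2.2.1 hr) hr
    have hb0 : b r0 = a0 := by simp [hbd, haa0, hβ0]
    rw [hb0, ← hqd] at h
    rw [hA, div_mul_eq_mul_div, le_div_iff₀ hsq]
    have e1 : 0 ≤ r0 * K := by positivity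
    have e2 : 0 ≤ r0 ^ δ * (2 + (√q * (-δ))⁻¹) * (L * |a0|) := by positivity
    linarith
  have hcb : ContinuousOn b (Ici r0) := fun r hr => (hb r hr).continuousWithinAt
  have hcb1 : ContinuousOn b1 (Ici r0) := fun r hr => (hb1 r hr).continuousWithinAt
  have hcc : ContinuousOn c (Ici r0) := fun r hr => (hc.hasDeriv hr).continuousWithinAt
  have hcc1 : ContinuousOn (d1 r0 c) (Ici r0) := fun r hr => (hc.hasDeriv2 hr).continuousWithinAt
  have hcinv : ContinuousOn (fun r : ℝ => r⁻¹) (Ici r0) :=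
    continuousOn_inv₀.mono fun r hr => (h0.trans_le hr).ne'
  have hNb : N r0 δ b ≤ ENNReal.ofReal (8 * A^2 * (a0^2 + K^2 / (1+L)^2))
      * N r0 δ (fun r => r⁻¹) := by
    have := N_le_two (μ := δ) (μ1 := δ) (μ2 := δ) (f := b) (f1 := fun r => r⁻¹) (f2 := fun _ => 0)
      (K := 8 * A^2 * (a0^2 + K^2 / (1+L)^2)) h0 (by positivity) hcinv continuousOn_const ?_
    · rwa [N_zero, add_zero] at this
    intro r hr
    have hr' : 0 < r := h0.trans_le hr
    have hw : 0 ≤ r ^ (-2*δ) := by positivity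
    have h1 := hbb r hr
    have h2 : ((1+L) * (r * |b r|))^2 ≤ 8 * A^2 * ((1+L)^2 * a0^2 + K^2) := by
      have hx : 0 ≤ r * |b r| := by positivity
      have h3 : (1+L) * (r * |b r|) ≤ 2 * (A * (L * |a0| + K)) := by
        linarith [mul_le_mul_of_nonneg_right hL1 hx]
      calc _ ≤ (2 * (A * (L * |a0| + K)))^2 := by gcongr
        _ = 4 * A^2 * (L * |a0| + K)^2 := by ring
        _ ≤ 4 * A^2 * (2 * ((1+L)^2 * a0^2 + K^2)) := by
          gcongr
          have : L^2 * a0^2 ≤ (1+L)^2 * a0^2 := by gcongr; linarith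
          have hsa : L^2 * |a0|^2 = L^2 * a0^2 := by rw [sq_abs]
          linarith [sq_nonneg (L * |a0| - K)]
        _ = _ := by ring
    have h3 : (r * b r)^2 ≤ 8 * A^2 * (a0^2 + K^2 / (1+L)^2) := by
      have e : (r * b r)^2 = ((1+L) * (r * |b r|))^2 / (1+L)^2 := by
        rw [mul_pow (1+L), mul_pow r |b r|, sq_abs]; field_simp
      rw [e, div_le_iff₀ (by positivity)]
      refine h2.trans (le_of_eq ?_)
      field_simp
    have h4 : (b r)^2 ≤ 8 * A^2 * (a0^2 + K^2 / (1+L)^2) * (r⁻¹)^2 := by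
      rw [inv_pow, ← div_eq_mul_inv, le_div_iff₀ (by positivity)]
      linarith
    calc _ ≤ r ^ (-2*δ) * (8 * A^2 * (a0^2 + K^2 / (1+L)^2) * (r⁻¹)^2) := by gcongr
      _ = _ := by ring
  -- elementary pointwise bounds with `D = r (r - 2 m0) ≥ q r²`
  have hpw : ∀ r, r0 ≤ r → ∀ x y : ℝ, r*(r - 2*m0) * x = y → (r^2 * x)^2 ≤ (q⁻¹)^2 * y^2 := by
    intro r hr x y hxy
    have hr' : 0 < r := h0.trans_le hr
    have h1 := hDl r hr
    have h2 : (q * r^2 * x)^2 ≤ y^2 := by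
      rw [← hxy, mul_pow _ x, mul_pow _ x]; gcongr
    have h3 : (r^2 * x)^2 = (q⁻¹)^2 * (q * r^2 * x)^2 := by field_simp
    rw [h3]; gcongr
  have hrm : ∀ r, r0 ≤ r → (r - m0)^2 ≤ r^2 := fun r hr =>
    pow_le_pow_left₀ (by linarith) (by linarith) 2
  have hrinv : ∀ r, r0 ≤ r → 1 ≤ (r0⁻¹)^2 * r^2 := fun r hr => by
    rw [inv_pow, inv_mul_eq_div, one_le_div (by positivity)]; gcongr
  have hNb1 : N r0 (δ-1) b1 ≤ ENNReal.ofReal C2 * (N r0 δ c + N r0 δ b) := by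
    refine N_le_two h0 hC20 hcc hcb fun r hr => ?_
    have hr' : 0 < r := h0.trans_le hr
    have hw : 0 ≤ r ^ (-2*δ) := by positivity
    rw [(weight_eq hr' δ).1]
    have h1 := hpw r hr (b1 r) (c r - (r - m0) * b r) (by linarith [he r hr])
    have h2 : (c r - (r - m0) * b r)^2 ≤ 2 * (c r ^ 2 + r^2 * b r ^ 2) := by
      have := mul_le_mul_of_nonneg_right (hrm r hr) (sq_nonneg (b r))
      linarith [sq_nonneg (c r + (r - m0) * b r)]
    have h3 : c r ^ 2 + r^2 * b r ^ 2 ≤ r^2 * ((1 + (r0⁻¹)^2) * (1 + r0^2) * (c r ^ 2 + b r ^ 2)) := by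
      have e1 := mul_le_mul_of_nonneg_right (hrinv r hr) (sq_nonneg (c r))
      have e2 : 0 ≤ r^2 * (r0⁻¹)^2 * b r ^ 2 := by positivity
      have e3 : 0 ≤ r^2 * c r ^ 2 := by positivity
      have e4 : 0 ≤ r0^2 * (r^2 * ((1 + (r0⁻¹)^2) * (c r ^ 2 + b r ^ 2))) := by positivity
      linarith
    have h4 : r^2 * b1 r ^ 2 ≤ C2 * (c r ^ 2 + b r ^ 2) := by
      refine le_of_mul_le_mul_left ?_ (by positivity : 0 < r^2)
      calc r^2 * (r^2 * b1 r ^ 2) = (r^2 * b1 r)^2 := by ring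
        _ ≤ (q⁻¹)^2 * (2 * (r^2 * ((1 + (r0⁻¹)^2) * (1 + r0^2) * (c r ^ 2 + b r ^ 2)))) := by
          refine h1.trans ?_
          gcongr
          linarith
        _ = _ := by rw [hC2]; ring
    calc _ = r ^ (-2*δ) * (r^2 * b1 r ^ 2) := by ring
      _ ≤ r ^ (-2*δ) * (C2 * (c r ^ 2 + b r ^ 2)) := by gcongr
      _ = _ := by ring
  have hNb2 : N r0 (δ-2) b2 ≤
      ENNReal.ofReal C3 * (N r0 (δ-1) (d1 r0 c) + N r0 (δ-1) b1 + N r0 δ b) := by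
    refine N_le h0 hC30 hcc1 hcb1 fun r hr => ?_
    have hr' : 0 < r := h0.trans_le hr
    have hw : 0 ≤ r ^ (-2*δ) := by positivity
    rw [(weight_eq hr' δ).1, (weight_eq hr' δ).2]
    have h1 := hpw r hr (b2 r) (d1 r0 c r + (-3 * (r - m0) * b1 r) + (- b r))
      (by linarith [he2 r hr])
    have h2 := add_three_sq_le (d1 r0 c r) (-3 * (r - m0) * b1 r) (- b r)
    have h3 : d1 r0 c r ^ 2 + (-3 * (r - m0) * b1 r)^2 + (- b r)^2
        ≤ 9 * (1 + (r0⁻¹)^2) * (r^2 * d1 r0 c r ^ 2 + r^2 * b1 r ^ 2 + b r ^ 2) := by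
      have e0 := mul_le_mul_of_nonneg_right (hrm r hr) (sq_nonneg (b1 r))
      have e1 := mul_le_mul_of_nonneg_right (hrinv r hr) (sq_nonneg (d1 r0 c r))
      have e2 : 0 ≤ r^2 * d1 r0 c r ^ 2 := by positivity
      have e3 : 0 ≤ (r0⁻¹)^2 * (r^2 * b1 r ^ 2) := by positivity
      have e4 : 0 ≤ (r0⁻¹)^2 * (b r ^ 2) := by positivity
      linarith [sq_nonneg (b r), sq_nonneg (d1 r0 c r)]
    have h4 : r^4 * b2 r ^ 2 ≤ C3 * (r^2 * d1 r0 c r ^ 2 + r^2 * b1 r ^ 2 + b r ^ 2) := by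
      calc r^4 * b2 r ^ 2 = (r^2 * b2 r)^2 := by ring
        _ ≤ (q⁻¹)^2 * (3 * (9 * (1 + (r0⁻¹)^2) *
            (r^2 * d1 r0 c r ^ 2 + r^2 * b1 r ^ 2 + b r ^ 2))) := by
          refine h1.trans ?_
          gcongr
          linarith
        _ = _ := by rw [hC3]; ring
    calc _ = r ^ (-2*δ) * (r^4 * b2 r ^ 2) := by ring
      _ ≤ r ^ (-2*δ) * (C3 * (r^2 * d1 r0 c r ^ 2 + r^2 * b1 r ^ 2 + b r ^ 2)) := by gcongr
      _ = _ := by ring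
  have hNa := N_add_le h0 δ ha.1.continuousOn hβ.1.continuousOn
  have hNa1 := N_add_le h0 (δ-1) ha.contDiffOn_d1.continuousOn hβ.contDiffOn_d1.continuousOn
  have hNa2 := N_add_le h0 (δ-2) ha.continuousOn_d2 hβ.continuousOn_d2
  have hKc : ENNReal.ofReal (K^2) ≤ N r0 (δ-1) (d1 r0 c) := by
    rw [hK, Real.sq_sqrt ENNReal.toReal_nonneg, ENNReal.ofReal_toReal hc.2.2.2.2.2.1]
    exact le_add_self
  -- every quantity is finite, so the conclusion is an inequality between real numbers
  have tb : N r0 δ b ≠ ⊤ := ne_top_of_le_ne_top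
    (ENNReal.mul_ne_top ENNReal.ofReal_ne_top (N_inv_ne_top h0 hδ1)) hNb
  have tb1 : N r0 (δ-1) b1 ≠ ⊤ := ne_top_of_le_ne_top
    (ENNReal.mul_ne_top ENNReal.ofReal_ne_top (ENNReal.add_ne_top.2 ⟨hc.N_ne_top.1, tb⟩)) hNb1
  have tb2 : N r0 (δ-2) b2 ≠ ⊤ := ne_top_of_le_ne_top
    (ENNReal.mul_ne_top ENNReal.ofReal_ne_top (ENNReal.add_ne_top.2
      ⟨ENNReal.add_ne_top.2 ⟨hc.N_ne_top.2.1, tb1⟩, tb⟩)) hNb2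
  have real : ∀ x : ℝ≥0∞, x ≠ ⊤ → ∃ y : ℝ, 0 ≤ y ∧ x = ENNReal.ofReal y := fun x hx =>
    ⟨x.toReal, ENNReal.toReal_nonneg, (ENNReal.ofReal_toReal hx).symm⟩
  rw [show N r0 δ (fun r => r⁻¹) = ENNReal.ofReal I by
    rw [hI, ENNReal.ofReal_toReal (N_inv_ne_top h0 hδ1)]] at hNb
  suffices h : N r0 (δ-2) (d2 r0 a) + ENNReal.ofReal (1 + L) * N r0 (δ-1) (d1 r0 a)
      + ENNReal.ofReal (1 + L)^2 * N r0 δ a ≤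
      ENNReal.ofReal (2 * (C3 * (1 + C2 * (1 + C1) + C1) + C2 * (1 + C1) + C1 + 3)) *
      (N r0 (δ-1) (d1 r0 c) + N r0 (δ-2) (d2 r0 β)
        + ENNReal.ofReal (1 + L) * (N r0 δ c + N r0 (δ-1) (d1 r0 β))
        + ENNReal.ofReal (1 + L)^2 * N r0 δ β
        + ENNReal.ofReal (1 + L)^2 * ENNReal.ofReal (a0^2)) by
    simpa only [N, add_assoc] using h
  obtain ⟨nb, pb, eb⟩ := real _ tb
  obtain ⟨nb1, pb1, eb1⟩ := real _ tb1
  obtain ⟨nb2, pb2, eb2⟩ := real _ tb2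
  obtain ⟨na, pa, ea⟩ := real _ ha.N_ne_top.1
  obtain ⟨na1, pa1, ea1⟩ := real _ ha.N_ne_top.2.1
  obtain ⟨na2, pa2, ea2⟩ := real _ ha.N_ne_top.2.2
  obtain ⟨nβ, pβ, eβ⟩ := real _ hβ.N_ne_top.1
  obtain ⟨nβ1, pβ1, eβ1⟩ := real _ hβ.N_ne_top.2.1
  obtain ⟨nβ2, pβ2, eβ2⟩ := real _ hβ.N_ne_top.2.2
  obtain ⟨nc, pc, ec⟩ := real _ hc.N_ne_top.1
  obtain ⟨nc1, pc1, ec1⟩ := real _ hc.N_ne_top.2.1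
  rw [eb, ← ENNReal.ofReal_mul (by positivity), ENNReal.ofReal_le_ofReal_iff (by positivity)] at hNb
  rw [eb1, ec, eb, ← ENNReal.ofReal_add pc pb, ← ENNReal.ofReal_mul hC20,
    ENNReal.ofReal_le_ofReal_iff (by positivity)] at hNb1
  rw [eb2, ec1, eb1, eb, ← ENNReal.ofReal_add pc1 pb1, ← ENNReal.ofReal_add (by positivity) pb,
    ← ENNReal.ofReal_mul hC30, ENNReal.ofReal_le_ofReal_iff (by positivity)] at hNb2
  rw [ec1, ENNReal.ofReal_le_ofReal_iff pc1] at hKc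
  rw [ea, eb, eβ, ← ENNReal.ofReal_add pb pβ, ← ENNReal.ofReal_mul (by norm_num),
    ENNReal.ofReal_le_ofReal_iff (by positivity)] at hNa
  rw [ea1, eb1, eβ1, ← ENNReal.ofReal_add pb1 pβ1, ← ENNReal.ofReal_mul (by norm_num),
    ENNReal.ofReal_le_ofReal_iff (by positivity)] at hNa1
  rw [ea2, eb2, eβ2, ← ENNReal.ofReal_add pb2 pβ2, ← ENNReal.ofReal_mul (by norm_num),
    ENNReal.ofReal_le_ofReal_iff (by positivity)] at hNa2
  rw [ea, ea1, ea2, ec, ec1, eβ, eβ1, eβ2]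
  have hΛ0 : 0 ≤ 1 + L := by linarith
  rw [← ENNReal.ofReal_pow hΛ0, ← ENNReal.ofReal_mul hΛ0, ← ENNReal.ofReal_mul (by positivity),
    ← ENNReal.ofReal_add pa2 (by positivity), ← ENNReal.ofReal_add (by positivity) (by positivity),
    ← ENNReal.ofReal_add pc pβ1, ← ENNReal.ofReal_mul hΛ0, ← ENNReal.ofReal_mul (by positivity),
    ← ENNReal.ofReal_mul (by positivity), ← ENNReal.ofReal_add pc1 pβ2,
    ← ENNReal.ofReal_add (by positivity) (by positivity),
    ← ENNReal.ofReal_add (by positivity) (by positivity),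
    ← ENNReal.ofReal_add (by positivity) (by positivity),
    ← ENNReal.ofReal_mul (by positivity)]
  refine ENNReal.ofReal_le_ofReal ?_
  obtain ⟨Λ, hΛ⟩ : ∃ Λ, Λ = 1 + L := ⟨_, rfl⟩
  have hΛ1 : 1 ≤ Λ := by linarith
  have hΛp : 0 < Λ := by linarith
  rw [← hΛ] at hNb ⊢
  obtain ⟨R, hR⟩ : ∃ R, R = nc1 + nβ2 + Λ * (nc + nβ1) + Λ^2 * nβ + Λ^2 * a0^2 := ⟨_, rfl⟩
  rw [← hR]
  have g1 : 0 ≤ Λ * nc := by positivity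
  have g2 : 0 ≤ Λ * nβ1 := by positivity
  have g3 : 0 ≤ Λ^2 * nβ := by positivity
  have g4 : 0 ≤ Λ^2 * a0^2 := by positivity
  rw [mul_add Λ] at hR
  have B0 : Λ^2 * nb ≤ C1 * R := by
    calc Λ^2 * nb ≤ Λ^2 * (8 * A^2 * (a0^2 + K^2 / Λ^2) * I) := by gcongr
      _ = C1 * (Λ^2 * a0^2 + K^2) := by rw [hC1]; field_simp
      _ ≤ C1 * R := by gcongr; linarith
  have B0' : Λ * nb ≤ C1 * R := by
    refine le_trans ?_ B0
    gcongr
    nlinarith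
  have B1 : Λ * nb1 ≤ C2 * (1 + C1) * R := by
    calc Λ * nb1 ≤ Λ * (C2 * (nc + nb)) := by gcongr
      _ = C2 * (Λ * nc + Λ * nb) := by ring
      _ ≤ C2 * (R + C1 * R) := by gcongr; linarith
      _ = _ := by ring
  have B2 : nb2 ≤ C3 * (1 + C2 * (1 + C1) + C1) * R := by
    have i1 : nb ≤ Λ * nb := le_mul_of_one_le_left pb hΛ1
    have i2 : nb1 ≤ Λ * nb1 := le_mul_of_one_le_left pb1 hΛ1
    calc nb2 ≤ C3 * (nc1 + nb1 + nb) := hNb2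
      _ ≤ C3 * (R + C2 * (1 + C1) * R + C1 * R) := by gcongr <;> linarith
      _ = _ := by ring
  have A1 : Λ * na1 ≤ 2 * (Λ * nb1 + Λ * nβ1) := by
    calc Λ * na1 ≤ Λ * (2 * (nb1 + nβ1)) := by gcongr
      _ = _ := by ring
  have A0 : Λ^2 * na ≤ 2 * (Λ^2 * nb + Λ^2 * nβ) := by
    calc Λ^2 * na ≤ Λ^2 * (2 * (nb + nβ)) := by gcongr
      _ = _ := by ring
  have R0 : 0 ≤ R := by linarith
  linarith
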